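/- arXiv:2203.10801 — 3 statements merged into one kernel-verified Lean document; each statement's English description precedes it below -/
import Mathlib

section
/- Let n ≥ 6 with n ≡ 0 (mod 3), and let V = (Fin n → ZMod 3) with the symmetric bilinear form B(x,y) = Σ_{i=1}^{n−1} x_i y_i + 2 x_n y_n (Gram determinant −1, i.e., type '−'). Then: (a) there exists an injective group homomorphism ψ from the symmetric group S_n to the group of linear automorphisms of V such that for every transposition τ ∈ S_n, ψ(τ) is a reflection t_v for some v ∈ V with B(v,v) = 2; and (b) there is no injective group homomorphism from S_{n+1} to the linear automorphisms of V sending every transposition to such a reflection. (Equivalently, φ(O_n^{−,+}(3)) = n when n ≡ 0 (mod 3).) -/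
/-!
Part (a). For `n ≡ 0 (mod 3)` the root system `A_{n-1}` modulo `3` has a one-dimensional radical,
and the quotient by it has dimension `n - 2` and embeds in `V`: let `f_i` be the standard basis
vector for `i < n - 1` and `f_{n-1} = -(1, …, 1, 0)`. Then `B(f_i, f_j) = δ_ij + g_i + g_j`
(`oForm_rootVec`), so that the differences `f_i - f_j` have the inner products of the roots
`e_i - e_j`. The formula `w ↦ w + ∑ i, B(w, f_i) (f_{σ i} - f_i)` (`permMap`) is an action of the
symmetric group in which the transposition `(i j)` acts as the reflection in `f_i - f_j`.

Part (b). Given such an action of `S_{n+1}`, let `v_i` be the vector of the transposition `(0 i)`,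
`1 ≤ i ≤ n`. Two distinct reflections commute exactly if their vectors are orthogonal
(`oForm_eq_zero_of_commute`, `reflFun_commute`). So `B(v_i, v_j) ≠ 0` for `i ≠ j`, and after a
change of signs `B(v_1, v_i) = 1` for `i ≠ 1`. As `(i j)` commutes with `(0 1)`, also
`B(v_i, v_j) = 1`. The Gram matrix of the `n` vectors `v_i` is then `1 + J`, where `J` is the
all-ones matrix. Its determinant is `1 + n = 1`. But a Gram matrix of `n` vectors has determinant
`2 d ^ 2` for some `d`, and `2 d ^ 2 = 1` has no solution modulo `3`.
-/

/-- The symmetric bilinear form `B x y = ∑_{i<n-1} x i * y i + 2 * x (n-1) * y (n-1)`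
on `(ZMod 3)^n` (Gram determinant `-1`, type `-`). -/
def oForm (n : ℕ) (x y : Fin n → ZMod 3) : ZMod 3 :=
  ∑ i : Fin n, (if (i : ℕ) = n - 1 then 2 else 1) * (x i * y i)

/-! ### Bilinearity of the form -/

section Form

variable {n : ℕ}

lemma oForm_comm (x y : Fin n → ZMod 3) : oForm n x y = oForm n y x := by
  simp only [oForm, mul_comm (x _)]

lemma oForm_add_left (x y z : Fin n → ZMod 3) :
    oForm n (x + y) z = oForm n x z + oForm n y z := by
  simp only [oForm, ← Finset.sum_add_distrib, Pi.add_apply]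
  exact Finset.sum_congr rfl fun _ _ => by ring

lemma oForm_smul_left (c : ZMod 3) (x z : Fin n → ZMod 3) :
    oForm n (c • x) z = c * oForm n x z := by
  simp only [oForm, Finset.mul_sum, Pi.smul_apply, smul_eq_mul]
  exact Finset.sum_congr rfl fun _ _ => by ring

lemma oForm_sub_left (x y z : Fin n → ZMod 3) :
    oForm n (x - y) z = oForm n x z - oForm n y z := by
  simp only [oForm, ← Finset.sum_sub_distrib, Pi.sub_apply]
  exact Finset.sum_congr rfl fun _ _ => by ring

lemma oForm_sub_right (x y z : Fin n → ZMod 3) :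
    oForm n z (x - y) = oForm n z x - oForm n z y := by
  rw [oForm_comm, oForm_sub_left, oForm_comm x, oForm_comm y]

lemma oForm_smul_right (c : ZMod 3) (x z : Fin n → ZMod 3) :
    oForm n z (c • x) = c * oForm n z x := by
  rw [oForm_comm, oForm_smul_left, oForm_comm x]

lemma oForm_sum_left {ι : Type*} (s : Finset ι) (x : ι → Fin n → ZMod 3) (z : Fin n → ZMod 3) :
    oForm n (∑ i ∈ s, x i) z = ∑ i ∈ s, oForm n (x i) z := by
  simp only [oForm, Finset.sum_apply, Finset.sum_mul, Finset.mul_sum]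
  exact Finset.sum_comm

end Form

/-! ### The action of the symmetric group on `n` letters -/

/-- The vectors `f_i`: standard basis vectors for `i < n - 1`, and `-(1, …, 1, 0)` for
`i = n - 1`. They sum to zero. -/
def rootVec (n : ℕ) (i : Fin n) : Fin n → ZMod 3 :=
  if (i : ℕ) = n - 1 then fun k => if (k : ℕ) = n - 1 then 0 else -1 else Pi.single i 1

/-- The correction term `g_i` in `B(f_i, f_j) = δ_ij + g_i + g_j`. -/
def rootCorr (n : ℕ) (i : Fin n) : ZMod 3 := if (i : ℕ) = n - 1 then -1 else 0

lemma sum_ite_last (n : ℕ) (hn : 6 ≤ n) (a b : ZMod 3) :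
    ∑ k : Fin n, (if (k : ℕ) = n - 1 then a else b) = a - b + n * b := by
  have h : ∀ k : Fin n, (if (k : ℕ) = n - 1 then a else b)
      = (if k = (⟨n - 1, by omega⟩ : Fin n) then a - b else 0) + b := by
    intro k
    simp only [Fin.ext_iff]
    split_ifs <;> ring
  simp_rw [h]
  rw [Finset.sum_add_distrib, Finset.sum_ite_eq']
  simp

lemma oForm_rootVec (n : ℕ) (hn : 6 ≤ n) (hmod : n % 3 = 0) (i j : Fin n) :
    oForm n (rootVec n i) (rootVec n j)
      = (if i = j then 1 else 0) + rootCorr n i + rootCorr n j := by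
  have hn0 : (n : ZMod 3) = 0 := (ZMod.natCast_eq_zero_iff n 3).2 (Nat.dvd_of_mod_eq_zero hmod)
  have key : ∀ i j : Fin n, (i : ℕ) ≠ n - 1 →
      oForm n (rootVec n i) (rootVec n j) = rootVec n j i := by
    intro i j hi
    simp only [oForm]
    rw [Finset.sum_eq_single i]
    · simp [rootVec, hi]
    · intro k _ hk
      simp [rootVec, hi, hk]
    · simp
  by_cases hi : (i : ℕ) = n - 1
  · by_cases hj : (j : ℕ) = n - 1
    · have hij : i = j := Fin.ext (hi.trans hj.symm)
      subst hij
      have h : ∀ k : Fin n, (if (k : ℕ) = n - 1 then (2 : ZMod 3) else 1) *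
          (rootVec n i k * rootVec n i k) = if (k : ℕ) = n - 1 then 0 else 1 := by
        intro k
        simp only [rootVec, hi, if_true]
        split_ifs <;> simp
      simp only [oForm, h]
      rw [sum_ite_last n hn, hn0]
      simp only [rootCorr, hi, if_true]
      decide
    · have hij : i ≠ j := fun h => hj (h ▸ hi)
      rw [oForm_comm, key j i hj]
      simp [rootVec, rootCorr, hi, hj, hij]
  · rw [key i j hi]
    by_cases hj : (j : ℕ) = n - 1
    · have hij : i ≠ j := fun h => hi (h ▸ hj)
      simp [rootVec, rootCorr, hi, hj, hij]
    · simp [rootVec, rootCorr, hi, hj, Pi.single_apply]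

/-- The linear map `w ↦ w + ∑ i, B(w, f_i) (f_{σ i} - f_i)`. It sends `f_k - f_l` to
`f_{σ k} - f_{σ l}` and fixes the orthogonal complement of these differences. -/
def permMap (n : ℕ) (σ : Equiv.Perm (Fin n)) : (Fin n → ZMod 3) →ₗ[ZMod 3] (Fin n → ZMod 3) where
  toFun w := w + ∑ i, oForm n w (rootVec n i) • (rootVec n (σ i) - rootVec n i)
  map_add' x y := by
    simp only [oForm_add_left, add_smul, Finset.sum_add_distrib]
    abel
  map_smul' c x := by
    simp only [oForm_smul_left, mul_smul, ← Finset.smul_sum, smul_add, RingHom.id_apply]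

lemma permMap_apply (n : ℕ) (σ : Equiv.Perm (Fin n)) (w : Fin n → ZMod 3) :
    permMap n σ w = w + ∑ i, oForm n w (rootVec n i) • (rootVec n (σ i) - rootVec n i) := rfl

/-- Up to a term independent of `i`, the map of `τ` permutes the coordinates `B(w, f_i)`. -/
lemma oForm_permMap (n : ℕ) (hn : 6 ≤ n) (hmod : n % 3 = 0) (τ : Equiv.Perm (Fin n))
    (w : Fin n → ZMod 3) : ∃ K : ZMod 3, ∀ i,
      oForm n (permMap n τ w) (rootVec n (τ i)) = oForm n w (rootVec n i) + K := by
  refine ⟨∑ k, oForm n w (rootVec n k) * (rootCorr n (τ k) - rootCorr n k), fun i => ?_⟩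
  rw [permMap_apply, oForm_add_left, oForm_sum_left]
  have h : ∀ k, oForm n (oForm n w (rootVec n k) • (rootVec n (τ k) - rootVec n k))
        (rootVec n (τ i))
      = (if k = i then oForm n w (rootVec n k) else 0)
        - (if k = τ i then oForm n w (rootVec n k) else 0)
        + oForm n w (rootVec n k) * (rootCorr n (τ k) - rootCorr n k) := by
    intro k
    rw [oForm_smul_left, oForm_sub_left, oForm_rootVec n hn hmod, oForm_rootVec n hn hmod]
    simp only [τ.injective.eq_iff]
    split_ifs <;> ring
  simp_rw [h]
  rw [Finset.sum_add_distrib, Finset.sum_sub_distrib, Finset.sum_ite_eq', Finset.sum_ite_eq']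
  simp only [Finset.mem_univ, if_true]
  ring

lemma permMap_mul (n : ℕ) (hn : 6 ≤ n) (hmod : n % 3 = 0) (σ τ : Equiv.Perm (Fin n)) :
    permMap n (σ * τ) = permMap n σ * permMap n τ := by
  refine LinearMap.ext fun w => ?_
  rw [Module.End.mul_apply, permMap_apply n σ]
  obtain ⟨K, hK⟩ := oForm_permMap n hn hmod τ w
  rw [← Equiv.sum_comp τ]
  simp_rw [hK, add_smul]
  have h0 : ∑ i, K • (rootVec n (σ (τ i)) - rootVec n (τ i)) = 0 := by
    rw [← Finset.smul_sum, Finset.sum_sub_distrib, Equiv.sum_comp τ (fun i => rootVec n (σ i)),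
      Equiv.sum_comp σ, Equiv.sum_comp τ, sub_self, smul_zero]
  rw [Finset.sum_add_distrib, h0, add_zero, permMap_apply, permMap_apply, add_assoc,
    ← Finset.sum_add_distrib]
  congr 1
  refine Finset.sum_congr rfl fun i _ => ?_
  rw [← smul_add]
  congr 1
  simp only [Equiv.Perm.mul_apply]
  abel

/-- `permMap` as a homomorphism to the endomorphism monoid. -/
def permHom (n : ℕ) (hn : 6 ≤ n) (hmod : n % 3 = 0) :
    Equiv.Perm (Fin n) →* Module.End (ZMod 3) (Fin n → ZMod 3) where
  toFun := permMap n
  map_one' := by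
    refine LinearMap.ext fun w => ?_
    simp [permMap_apply]
  map_mul' := permMap_mul n hn hmod

lemma permMap_rootVec_sub (n : ℕ) (hn : 6 ≤ n) (hmod : n % 3 = 0) (σ : Equiv.Perm (Fin n))
    (k l : Fin n) : permMap n σ (rootVec n k - rootVec n l)
      = rootVec n (σ k) - rootVec n (σ l) := by
  have h : ∀ i, oForm n (rootVec n k - rootVec n l) (rootVec n i)
      = (if i = k then 1 else 0) - (if i = l then 1 else 0) + (rootCorr n k - rootCorr n l) := by
    intro i
    rw [oForm_sub_left, oForm_rootVec n hn hmod, oForm_rootVec n hn hmod]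
    simp only [eq_comm (a := i)]
    ring
  rw [permMap_apply]
  simp_rw [h]
  generalize rootCorr n k - rootCorr n l = c
  simp_rw [add_smul, sub_smul, ite_smul, one_smul, zero_smul]
  rw [Finset.sum_add_distrib, Finset.sum_sub_distrib, Finset.sum_ite_eq', Finset.sum_ite_eq',
    ← Finset.smul_sum, Finset.sum_sub_distrib, Equiv.sum_comp σ]
  simp only [Finset.mem_univ, if_true, sub_self, smul_zero]
  abel

lemma permMap_injective (n : ℕ) (hn : 6 ≤ n) (hmod : n % 3 = 0) :
    Function.Injective (permHom n hn hmod) := by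
  rw [injective_iff_map_eq_one]
  intro σ hσ
  by_contra hne
  obtain ⟨k, hk⟩ : ∃ k, σ k ≠ k := by
    by_contra! h
    exact hne (Equiv.ext h)
  -- A letter `l` away from `k` and its neighbours makes the inner product below `0` or `1`.
  obtain ⟨l, hl⟩ : ∃ l, l ∉ ({k, σ k, σ.symm k} : Finset (Fin n)) := by
    by_contra! h
    have h1 : (Finset.univ : Finset (Fin n)).card ≤ ({k, σ k, σ.symm k} : Finset (Fin n)).card :=
      Finset.card_le_card fun x _ => h x
    have h2 := Finset.card_le_three (a := k) (b := σ k) (c := σ.symm k)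
    simp at h1
    omega
  simp only [Finset.mem_insert, Finset.mem_singleton, not_or] at hl
  obtain ⟨h1, h2, h3⟩ := hl
  have h3' : σ l ≠ k := fun h => h3 (by rw [← h, Equiv.symm_apply_apply])
  have e : permMap n σ (rootVec n k - rootVec n l) = rootVec n k - rootVec n l := by
    change permHom n hn hmod σ _ = _
    rw [hσ]
    rfl
  rw [permMap_rootVec_sub n hn hmod] at e
  have e2 := congrArg (fun x => oForm n x (rootVec n k - rootVec n l)) e
  simp only [oForm_sub_left, oForm_sub_right, oForm_rootVec n hn hmod, hk, Ne.symm h1, h1,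
    Ne.symm h2, h3', if_false, if_true] at e2
  have h' : (if σ l = l then (1 : ZMod 3) else 0) = 2 := by linear_combination e2
  have h02 : (0 : ZMod 3) ≠ 2 := by decide
  have h12 : (1 : ZMod 3) ≠ 2 := by decide
  split_ifs at h'
  · exact h12 h'
  · exact h02 h'

lemma permMap_swap (n : ℕ) {i j : Fin n} (hij : i ≠ j) (w : Fin n → ZMod 3) :
    permMap n (Equiv.swap i j) w
      = w - oForm n w (rootVec n i - rootVec n j) • (rootVec n i - rootVec n j) := by
  rw [permMap_apply, Fintype.sum_eq_add i j hij]
  · rw [Equiv.swap_apply_left, Equiv.swap_apply_right, oForm_sub_right]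
    module
  · rintro x ⟨hx, hy⟩
    rw [Equiv.swap_apply_of_ne_of_ne hx hy, sub_self, smul_zero]

lemma exists_embedding (n : ℕ) (hn : 6 ≤ n) (hmod : n % 3 = 0) :
    ∃ ψ : Equiv.Perm (Fin (n)) →* ((Fin n → ZMod 3) ≃ₗ[ZMod 3] (Fin n → ZMod 3)),
      Function.Injective ψ ∧
      ∀ τ : Equiv.Perm (Fin (n)), τ.IsSwap →
        ∃ v : Fin n → ZMod 3, oForm n v v = 2 ∧
          ∀ w, (ψ τ) w = w - oForm n w v • v := by
  let ψ := (LinearMap.GeneralLinearGroup.generalLinearEquiv (ZMod 3)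
    (Fin n → ZMod 3)).toMonoidHom.comp (permHom n hn hmod).toHomUnits
  have hψ : ∀ σ w, ψ σ w = permMap n σ w := fun σ w => rfl
  refine ⟨ψ, fun σ τ h => ?_, ?_⟩
  · apply permMap_injective n hn hmod
    refine LinearMap.ext fun w => ?_
    change permMap n σ w = permMap n τ w
    rw [← hψ, ← hψ, h]
  · rintro τ ⟨i, j, hij, rfl⟩
    refine ⟨rootVec n i - rootVec n j, ?_, fun w => ?_⟩
    · simp only [oForm_sub_left, oForm_sub_right, oForm_rootVec n hn hmod, hij, hij.symm,
        if_true, if_false]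
      ring
    · rw [hψ, permMap_swap n hij]

/-! ### Commuting reflections and the Gram determinant -/

/-- The map `w ↦ w - B(w, v) v`, which is the reflection in `v` when `B(v, v) = 2`. -/
def reflFun (n : ℕ) (v w : Fin n → ZMod 3) : Fin n → ZMod 3 := w - oForm n w v • v

lemma reflFun_commute {n : ℕ} {a b : Fin n → ZMod 3} (h : oForm n a b = 0)
    (w : Fin n → ZMod 3) : reflFun n a (reflFun n b w) = reflFun n b (reflFun n a w) := by
  have h' : oForm n b a = 0 := oForm_comm b a ▸ h
  simp only [reflFun, oForm_sub_left, oForm_smul_left, h, h']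
  module

lemma oForm_eq_zero_of_commute {n : ℕ} {a b : Fin n → ZMod 3} (ha : oForm n a a = 2)
    (hcomm : ∀ w, reflFun n a (reflFun n b w) = reflFun n b (reflFun n a w))
    (hne : ∃ w, reflFun n a w ≠ reflFun n b w) : oForm n a b = 0 := by
  by_contra h
  obtain ⟨w, hw⟩ := hne
  apply hw
  have e := hcomm a
  simp only [reflFun, oForm_sub_left, oForm_smul_left, ha, oForm_comm b a] at e
  -- Comparing the two products at `a` shows that `b` is a multiple of `a`.
  have hb : b = (2 * oForm n a b) • a := by
    funext k
    have ek := congrFun e k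
    simp only [Pi.sub_apply, Pi.smul_apply, smul_eq_mul] at ek ⊢
    generalize oForm n a b = c at *
    generalize a k = x at *
    generalize b k = y at *
    have aux : ∀ c x y : ZMod 3, c ≠ 0 → c * c * x = 2 * c * y → y = 2 * c * x := by decide
    apply aux c x y h
    linear_combination ek
  have hc : (2 * oForm n a b) * (2 * oForm n a b) = 1 := by
    have aux : ∀ c : ZMod 3, c ≠ 0 → (2 * c) * (2 * c) = 1 := by decide
    exact aux _ h
  generalize 2 * oForm n a b = c at *
  subst hb
  simp only [reflFun, oForm_smul_right, smul_smul]
  congr 2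
  linear_combination (- oForm n w a) * hc

/-- Conjugating the reflection in `b` by the reflection in `a` gives the reflection in the
image of `b`. -/
lemma reflFun_conj {n : ℕ} {a : Fin n → ZMod 3} (b : Fin n → ZMod 3) (ha : oForm n a a = 2)
    (w : Fin n → ZMod 3) :
    reflFun n a (reflFun n b (reflFun n a w)) = reflFun n (reflFun n a b) w := by
  simp only [reflFun, oForm_sub_left, oForm_smul_left, oForm_sub_right, oForm_smul_right, ha,
    oForm_comm a b]
  funext k
  simp only [Pi.sub_apply, Pi.smul_apply, smul_eq_mul]
  ring

/-- `n` vectors of `V` cannot have the Gram matrix `1 + J`, by comparison of discriminants. -/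
lemma not_gram (n : ℕ) (hn : 6 ≤ n) (hmod : n % 3 = 0) (w : Fin n → Fin n → ZMod 3)
    (hw : ∀ i j, oForm n (w i) (w j) = (if i = j then 1 else 0) + 1) : False := by
  have hn0 : (n : ZMod 3) = 0 := (ZMod.natCast_eq_zero_iff n 3).2 (Nat.dvd_of_mod_eq_zero hmod)
  let M : Matrix (Fin n) (Fin n) (ZMod 3) := Matrix.of w
  let D : Matrix (Fin n) (Fin n) (ZMod 3) :=
    Matrix.diagonal fun i => if (i : ℕ) = n - 1 then 2 else 1
  have hG : M * D * M.transpose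
      = 1 + Matrix.replicateCol Unit (fun _ => (1 : ZMod 3))
        * Matrix.replicateRow Unit (fun _ => (1 : ZMod 3)) := by
    ext i j
    rw [Matrix.mul_apply]
    simp only [D, Matrix.mul_diagonal]
    simp only [Matrix.transpose_apply, Matrix.add_apply, Matrix.one_apply,
      Matrix.mul_apply, Matrix.replicateCol_apply, Matrix.replicateRow_apply]
    have h := hw i j
    simp only [oForm] at h
    simp only [Finset.univ_unique, Finset.sum_const, Finset.card_singleton, one_smul, mul_one]
    rw [← h]
    refine Finset.sum_congr rfl fun k _ => ?_
    simp only [M, Matrix.of_apply]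
    ring
  have hD : D.det = 2 := by
    rw [Matrix.det_diagonal, Finset.prod_eq_single (⟨n - 1, by omega⟩ : Fin n)]
    · simp
    · intro k _ hk
      rw [if_neg fun h => hk (Fin.ext h)]
    · simp
  have hdet := congrArg Matrix.det hG
  rw [Matrix.det_one_add_replicateCol_mul_replicateRow, Matrix.det_mul, Matrix.det_mul,
    Matrix.det_transpose, hD] at hdet
  simp only [dotProduct, mul_one, Finset.sum_const, Finset.card_univ, Fintype.card_fin,
    nsmul_eq_mul, hn0, add_zero] at hdet
  generalize M.det = d at hdet
  revert d
  decide

lemma no_embedding (n : ℕ) (hn : 6 ≤ n) (hmod : n % 3 = 0)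
    (ψ : Equiv.Perm (Fin (n + 1)) →* ((Fin n → ZMod 3) ≃ₗ[ZMod 3] (Fin n → ZMod 3)))
    (hinj : Function.Injective ψ)
    (h : ∀ τ : Equiv.Perm (Fin (n + 1)), τ.IsSwap →
        ∃ v : Fin n → ZMod 3, oForm n v v = 2 ∧
          ∀ w, (ψ τ) w = w - oForm n w v • v) : False := by
  have hex : ∀ i : Fin n, ∃ v : Fin n → ZMod 3, oForm n v v = 2 ∧
      ∀ w, ψ (Equiv.swap 0 i.succ) w = reflFun n v w := fun i =>
    h _ ⟨0, i.succ, (Fin.succ_ne_zero i).symm, rfl⟩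
  choose v hv hr using hex
  have hψ : ∀ σ τ, (∀ w, ψ σ w = ψ τ w) → σ = τ := fun σ τ hw => hinj (LinearEquiv.ext hw)
  have hmul : ∀ σ τ w, ψ (σ * τ) w = ψ σ (ψ τ w) := by
    intro σ τ w
    rw [map_mul]
    rfl
  have hnz : ∀ i j, i ≠ j → oForm n (v i) (v j) ≠ 0 := by
    intro i j hij h0
    have e : Equiv.swap 0 i.succ * Equiv.swap 0 j.succ
        = Equiv.swap 0 j.succ * Equiv.swap (0 : Fin (n + 1)) i.succ := by
      apply hψ
      intro w
      rw [hmul, hmul, hr, hr, hr, hr, reflFun_commute h0]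
    have e2 := congrArg (fun σ => σ j.succ) e
    have hji : j.succ ≠ i.succ := fun h => hij (Fin.succ_injective _ h).symm
    simp only [Equiv.Perm.mul_apply, Equiv.swap_apply_right, Equiv.swap_apply_left,
      Equiv.swap_apply_of_ne_of_ne (Fin.succ_ne_zero j) hji] at e2
    exact Fin.succ_ne_zero i e2
  -- `(i j)` is the reflection in the image of `v j` under that of `v i`, and commutes with `(0 k)`.
  have htri : ∀ i j k, i ≠ j → i ≠ k → j ≠ k →
      oForm n (v j) (v k) = oForm n (v j) (v i) * oForm n (v i) (v k) := by
    intro i j k hij hik hjk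
    have hi0 := Fin.succ_ne_zero i
    have hj0 := Fin.succ_ne_zero j
    have hk0 := Fin.succ_ne_zero k
    have hij' : i.succ ≠ j.succ := fun h => hij (Fin.succ_injective _ h)
    have hik' : i.succ ≠ k.succ := fun h => hik (Fin.succ_injective _ h)
    have hjk' : j.succ ≠ k.succ := fun h => hjk (Fin.succ_injective _ h)
    have hs : Equiv.swap 0 i.succ * Equiv.swap 0 j.succ * Equiv.swap 0 i.succ
        = Equiv.swap i.succ j.succ := by
      have := Equiv.swap_mul_swap_mul_swap (x := j.succ) (y := 0) (z := i.succ) hj0 hij'.symm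
      rw [Equiv.swap_comm j.succ 0] at this
      exact this
    have hr2 : ∀ w, ψ (Equiv.swap i.succ j.succ) w = reflFun n (reflFun n (v i) (v j)) w := by
      intro w
      rw [← hs, hmul, hmul, hr, hr, hr, reflFun_conj _ (hv i)]
    have hnorm : oForm n (reflFun n (v i) (v j)) (reflFun n (v i) (v j)) = 2 := by
      simp only [reflFun, oForm_sub_left, oForm_smul_left, oForm_sub_right, oForm_smul_right, hv,
        oForm_comm (v i) (v j)]
      ring
    have hdis : Equiv.Perm.Disjoint (Equiv.swap i.succ j.succ) (Equiv.swap 0 k.succ) := by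
      intro x
      by_cases h1 : x = i.succ
      · right
        rw [h1, Equiv.swap_apply_of_ne_of_ne hi0 hik']
      · by_cases h2 : x = j.succ
        · right
          rw [h2, Equiv.swap_apply_of_ne_of_ne hj0 hjk']
        · left
          rw [Equiv.swap_apply_of_ne_of_ne h1 h2]
    have h0 : oForm n (reflFun n (v i) (v j)) (v k) = 0 := by
      apply oForm_eq_zero_of_commute hnorm
      · intro w
        rw [← hr2, ← hr2, ← hr, ← hr, ← hmul, ← hmul, hdis.commute.eq]
      · by_contra! hall
        have e : Equiv.swap i.succ j.succ = Equiv.swap 0 k.succ := by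
          apply hψ
          intro w
          rw [hr2, hr, hall]
        have e2 := congrArg (fun σ => σ i.succ) e
        simp only [Equiv.swap_apply_left, Equiv.swap_apply_of_ne_of_ne hi0 hik'] at e2
        exact hij' e2.symm
    simp only [reflFun, oForm_sub_left, oForm_smul_left] at h0
    linear_combination h0
  let z : Fin n := ⟨0, by omega⟩
  -- Signs normalised so that every `v i` with `i ≠ z` has inner product `1` with `v z`.
  let s : Fin n → ZMod 3 := fun i => if i = z then 1 else oForm n (v i) (v z)
  apply not_gram n hn hmod fun i => s i • v i
  intro i j
  rw [oForm_smul_left, oForm_smul_right]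
  have sq : ∀ c : ZMod 3, c ≠ 0 → c * c = 1 := by decide
  have hs : ∀ i, s i * s i = 1 := by
    intro i
    by_cases hi : i = z
    · simp [s, hi]
    · simp only [s, hi, if_false]
      exact sq _ (hnz i z hi)
  by_cases hij : i = j
  · subst hij
    rw [hv, if_pos rfl]
    linear_combination 2 * hs i
  · rw [if_neg hij]
    by_cases hi : i = z
    · have hj : j ≠ z := fun h => hij (hi.trans h.symm)
      have := sq _ (hnz j z hj)
      simp only [s, hi, hj, if_true, if_false, oForm_comm (v z) (v j)]
      linear_combination this
    · by_cases hj : j = z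
      · have := sq _ (hnz i z hi)
        simp only [s, hi, hj, if_true, if_false]
        linear_combination this
      · have h1 := htri j i z (Ne.symm hij) hj hi
        have h2 := sq _ (hnz i z hi)
        simp only [s, hi, hj, if_false]
        linear_combination h2 - oForm n (v i) (v z) * h1

/-- φ(O_n^{-,+}(3)) = n when n ≡ 0 (mod 3): S_n embeds with transpositions going to reflections t_v with B(v,v) = 2, while S_{n+1} does not. -/
theorem phi_O_minus_plus_3_mod_zero (n : ℕ) (hn : 6 ≤ n) (hmod : n % 3 = 0) :
    (∃ ψ : Equiv.Perm (Fin (n)) →* ((Fin n → ZMod 3) ≃ₗ[ZMod 3] (Fin n → ZMod 3)),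
      Function.Injective ψ ∧
      ∀ τ : Equiv.Perm (Fin (n)), τ.IsSwap →
        ∃ v : Fin n → ZMod 3, oForm n v v = 2 ∧
          ∀ w, (ψ τ) w = w - oForm n w v • v) ∧
    ¬ (∃ ψ : Equiv.Perm (Fin (n + 1)) →* ((Fin n → ZMod 3) ≃ₗ[ZMod 3] (Fin n → ZMod 3)),
      Function.Injective ψ ∧
      ∀ τ : Equiv.Perm (Fin (n + 1)), τ.IsSwap →
        ∃ v : Fin n → ZMod 3, oForm n v v = 2 ∧
          ∀ w, (ψ τ) w = w - oForm n w v • v) := by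
  exact ⟨exists_embedding n hn hmod, fun ⟨ψ, hinj, h⟩ => no_embedding n hn hmod ψ hinj h⟩
end

section
/- Let n ≥ 10 be even with n ≡ 2 (mod 8), and let V = (Fin n → ZMod 2) with the plus-type quadratic form Q(x) = Σ_{i=1}^{n/2} x_{2i−1} x_{2i} and its polar bilinear form B(x,y) = Q(x+y) + Q(x) + Q(y). Then: (a) there exists an injective group homomorphism ψ from the symmetric group S_n to the group of linear automorphisms of V such that for every transposition τ ∈ S_n, ψ(τ) is an orthogonal transvection t_v for some v ∈ V with Q(v) = 1; and (b) there is no injective group homomorphism from S_{n+1} to the linear automorphisms of V sending every transposition to such a transvection. (Equivalently, φ(O_n^{+}(2)) = n when n ≡ 2 (mod 8).) -/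
/-!
Call a family `u` of vectors *`c`-equiangular* if `Q (u i) = c` for all `i` and `B (u i) (u j) = 1`
for `i ≠ j`. On the span of such a family, `Q (∑ xᵢ uᵢ)` is the explicit polynomial
`c ∑ xᵢ + ∑_{i<j} xᵢ xⱼ` (`gramForm`), and for an even number of vectors the Gram matrix `J - I` is
invertible, so that `n` such vectors in `V` form a basis (`lin_injective`).

For part (a), a `0`-equiangular basis turns `V` into the permutation module of `S_n`, on which the
transposition `(i j)` acts as the transvection of `u i + u j`. Such a basis exists for
`n ≡ 2 (mod 8)`: for `n = 2` it is the standard basis, and from `n` to `n + 8` one uses nine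
pairwise non-orthogonal singular vectors of the eight-dimensional plus-type space, eight as new
basis vectors and the ninth to be added to all the old ones (`exists_family_add_eight`).

For part (b), two transvections commute exactly when their vectors are orthogonal, so the vectors
of the `n` transpositions `(0 i)` in `S_{n+1}` form a `1`-equiangular family, hence a basis of `V`.
Then `∑ (-1)^Q` over `V` equals `∑ (-1)^(gramForm 1)`. Splitting off two coordinates at a time, the
first sum doubles at each step (`gauss_Qform`) and is positive, while the second is multiplied by
`-4` for each four coordinates (`gauss_gramForm_add_four`) and is negative for `n ≡ 2 (mod 8)`: the
two forms have different Arf invariants.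
-/

/-- The plus-type quadratic form on `(ZMod 2)^n` (`n` even):
`Q x = ∑ i, x (2i) * x (2i+1)` (0-indexed). -/
def Qform (n : ℕ) (x : Fin n → ZMod 2) : ZMod 2 :=
  ∑ i : Fin (n / 2),
    x ⟨2 * i.1, by have := i.2; omega⟩ * x ⟨2 * i.1 + 1, by have := i.2; omega⟩

/-- The polar bilinear form `B x y = Q (x + y) + Q x + Q y` of a quadratic form `Q`. -/
def polarForm {n : ℕ} (Q : (Fin n → ZMod 2) → ZMod 2) (x y : Fin n → ZMod 2) : ZMod 2 :=
  Q (x + y) + Q x + Q y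

namespace OPlus

/-! ### The standard form and its polar form -/

lemma Qform_add_two (n : ℕ) (x : Fin (n + 2) → ZMod 2) :
    Qform (n + 2) x = x 0 * x 1 + Qform n (fun i => x i.succ.succ) := by
  unfold Qform
  have h : (n + 2) / 2 = n / 2 + 1 := by omega
  rw [← Equiv.sum_comp (finCongr h.symm), Fin.sum_univ_succ]
  rfl

lemma polarForm_eq {n : ℕ} (x y : Fin n → ZMod 2) :
    polarForm (Qform n) x y = ∑ i : Fin (n / 2),
      (x ⟨2 * i.1, by have := i.2; omega⟩ * y ⟨2 * i.1 + 1, by have := i.2; omega⟩ +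
        x ⟨2 * i.1 + 1, by have := i.2; omega⟩ * y ⟨2 * i.1, by have := i.2; omega⟩) := by
  unfold polarForm Qform
  rw [← Finset.sum_add_distrib, ← Finset.sum_add_distrib]
  refine Finset.sum_congr rfl fun i _ => ?_
  have key : ∀ a b c d : ZMod 2, (a + c) * (b + d) + a * b + c * d = a * d + b * c := by decide
  exact key _ _ _ _

lemma Qform_add {n : ℕ} (x y : Fin n → ZMod 2) :
    Qform n (x + y) = Qform n x + Qform n y + polarForm (Qform n) x y := by
  unfold polarForm
  generalize Qform n (x + y) = a
  generalize Qform n x = b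
  generalize Qform n y = c
  revert a b c
  decide

lemma polar_comm {n : ℕ} (x y : Fin n → ZMod 2) :
    polarForm (Qform n) x y = polarForm (Qform n) y x := by
  unfold polarForm
  rw [add_comm x y]
  ring

lemma polar_add_left {n : ℕ} (x y z : Fin n → ZMod 2) :
    polarForm (Qform n) (x + y) z = polarForm (Qform n) x z + polarForm (Qform n) y z := by
  simp only [polarForm_eq, ← Finset.sum_add_distrib, Pi.add_apply]
  exact Finset.sum_congr rfl fun i _ => by ring

lemma polar_add_right {n : ℕ} (x y z : Fin n → ZMod 2) :
    polarForm (Qform n) x (y + z) = polarForm (Qform n) x y + polarForm (Qform n) x z := by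
  rw [polar_comm, polar_add_left, polar_comm y, polar_comm z]

lemma polar_smul_left {n : ℕ} (a : ZMod 2) (x z : Fin n → ZMod 2) :
    polarForm (Qform n) (a • x) z = a * polarForm (Qform n) x z := by
  simp only [polarForm_eq, Finset.mul_sum, Pi.smul_apply, smul_eq_mul]
  exact Finset.sum_congr rfl fun i _ => by ring

lemma polar_zero_left {n : ℕ} (z : Fin n → ZMod 2) : polarForm (Qform n) 0 z = 0 := by
  simp [polarForm_eq]

lemma polar_self {n : ℕ} (x : Fin n → ZMod 2) : polarForm (Qform n) x x = 0 := by
  have key : ∀ a b : ZMod 2, a * b + b * a = 0 := by decide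
  rw [polarForm_eq]
  exact Finset.sum_eq_zero fun i _ => key _ _

lemma Qform_zero {n : ℕ} : Qform n 0 = 0 := by simp [Qform]

lemma Qform_smul {n : ℕ} (a : ZMod 2) (x : Fin n → ZMod 2) :
    Qform n (a • x) = a * Qform n x := by
  have h : ∀ t : ZMod 2, t = 0 ∨ t = 1 := by decide
  rcases h a with rfl | rfl
  · simp [Qform_zero]
  · simp

lemma polar_sum_left {n : ℕ} {ι : Type*} (s : Finset ι) (f : ι → Fin n → ZMod 2)
    (z : Fin n → ZMod 2) :
    polarForm (Qform n) (∑ i ∈ s, f i) z = ∑ i ∈ s, polarForm (Qform n) (f i) z := by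
  classical
  induction s using Finset.induction_on with
  | empty => simp [polar_zero_left]
  | insert a s ha ih => rw [Finset.sum_insert ha, Finset.sum_insert ha, polar_add_left, ih]

/-! ### Equiangular families -/

/-- The family `u` is `c`-equiangular for the standard form: all its vectors have `Q = c`, and
distinct vectors have `B = 1`. -/
def Equiangular {ι : Type*} (n : ℕ) (c : ZMod 2) (u : ι → Fin n → ZMod 2) : Prop :=
  (∀ i, Qform n (u i) = c) ∧ ∀ i j, i ≠ j → polarForm (Qform n) (u i) (u j) = 1

/-- The form `c ∑ xᵢ + ∑_{i<j} xᵢ xⱼ` on `(ZMod 2)^k`, defined by splitting off the first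
coordinate. -/
def gramForm (c : ZMod 2) : (k : ℕ) → (Fin k → ZMod 2) → ZMod 2
  | 0, _ => 0
  | k + 1, x => x 0 * c + x 0 * (∑ i : Fin k, x i.succ) + gramForm c k (fun i => x i.succ)

/-- The linear map sending the standard basis to the family `u`. -/
def lin {k n : ℕ} (u : Fin k → Fin n → ZMod 2) : (Fin k → ZMod 2) →ₗ[ZMod 2] (Fin n → ZMod 2) :=
  Fintype.linearCombination (ZMod 2) u

lemma lin_apply {k n : ℕ} (u : Fin k → Fin n → ZMod 2) (x : Fin k → ZMod 2) :
    lin u x = ∑ i, x i • u i := rfl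

lemma lin_single {k n : ℕ} (u : Fin k → Fin n → ZMod 2) (i : Fin k) :
    lin u (Pi.single i 1) = u i := by
  simp [lin]

lemma Qform_lin {n : ℕ} {c : ZMod 2} {k : ℕ} (u : Fin k → Fin n → ZMod 2)
    (hu : Equiangular n c u) (x : Fin k → ZMod 2) :
    Qform n (lin u x) = gramForm c k x := by
  induction k with
  | zero => simp [lin_apply, gramForm, Qform_zero]
  | succ k ih =>
    have h := ih (fun i => u i.succ) ⟨fun i => hu.1 _, fun i j hij => hu.2 _ _ (by simpa using hij)⟩
      (fun i => x i.succ)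
    rw [lin_apply] at h
    rw [lin_apply, Fin.sum_univ_succ, Qform_add, h, Qform_smul, hu.1, polar_comm, polar_sum_left,
      gramForm, Finset.mul_sum]
    have h2 : ∀ i : Fin k, polarForm (Qform n) (x i.succ • u i.succ) (x 0 • u 0)
        = x 0 * x i.succ := by
      intro i
      rw [polar_smul_left, polar_comm, polar_smul_left, hu.2 _ _ (Fin.succ_ne_zero i).symm]
      ring
    simp only [h2]
    ring

lemma polar_lin {n : ℕ} {c : ZMod 2} {k : ℕ} (u : Fin k → Fin n → ZMod 2)
    (hu : Equiangular n c u) (x : Fin k → ZMod 2) (j : Fin k) :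
    polarForm (Qform n) (lin u x) (u j) = (∑ i, x i) + x j := by
  rw [lin_apply, polar_sum_left]
  have h : ∀ i, polarForm (Qform n) (x i • u i) (u j) = x i + if i = j then x i else 0 := by
    intro i
    rw [polar_smul_left]
    by_cases hij : i = j
    · subst hij
      rw [polar_self, if_pos rfl, mul_zero]
      exact (CharTwo.add_self_eq_zero _).symm
    · simp [hu.2 _ _ hij, hij]
  simp only [h, Finset.sum_add_distrib, Finset.sum_ite_eq', Finset.mem_univ, if_true]

/-- An equiangular family of even size is linearly independent: a vector of the kernel has all
coordinates equal to their own sum, which vanishes because the size is even. -/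
lemma lin_injective {n : ℕ} {c : ZMod 2} {k : ℕ} (hk : Even k) (u : Fin k → Fin n → ZMod 2)
    (hu : Equiangular n c u) : Function.Injective (lin u) := by
  rw [injective_iff_map_eq_zero]
  intro x hx
  have h : ∀ j, x j = ∑ i, x i := by
    intro j
    have h1 := polar_lin u hu x j
    rw [hx, polar_zero_left] at h1
    exact (CharTwo.add_eq_zero.mp h1.symm).symm
  have h0 : ∑ i, x i = 0 := by
    have hk0 : (k : ZMod 2) = 0 := (ZMod.natCast_eq_zero_iff_even).2 hk
    generalize hs : ∑ i, x i = s at h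
    rw [← hs, Finset.sum_congr rfl fun j _ => h j]
    simp [hk0]
  funext j
  rw [h j, h0]
  rfl

/-! ### A `0`-equiangular basis for `n ≡ 2 (mod 8)` -/

/-- Concatenation of a vector of `(ZMod 2)^8` and a vector of `(ZMod 2)^n`, the former giving the
first eight coordinates. -/
def ext8 {n : ℕ} (X : Fin 8 → ZMod 2) (v : Fin n → ZMod 2) : Fin (n + 8) → ZMod 2 :=
  Matrix.vecCons (X 0) <| Matrix.vecCons (X 1) <| Matrix.vecCons (X 2) <| Matrix.vecCons (X 3) <|
  Matrix.vecCons (X 4) <| Matrix.vecCons (X 5) <| Matrix.vecCons (X 6) <| Matrix.vecCons (X 7) v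

lemma Qform_vecCons {n : ℕ} (a b : ZMod 2) (v : Fin n → ZMod 2) :
    Qform (n + 2) (Matrix.vecCons a (Matrix.vecCons b v)) = a * b + Qform n v :=
  Qform_add_two n _

lemma Qform_ext8 {n : ℕ} (X : Fin 8 → ZMod 2) (v : Fin n → ZMod 2) :
    Qform (n + 8) (ext8 X v) = Qform 8 X + Qform n v := by
  have h : Qform 8 X = X 0 * X 1 + (X 2 * X 3 + (X 4 * X 5 + X 6 * X 7)) := by
    simp [Qform, Fin.sum_univ_succ]
  rw [h, ext8, Qform_vecCons (n := n + 6), Qform_vecCons (n := n + 4), Qform_vecCons (n := n + 2),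
    Qform_vecCons (n := n)]
  ring

lemma ext8_add {n : ℕ} (X Y : Fin 8 → ZMod 2) (v w : Fin n → ZMod 2) :
    ext8 X v + ext8 Y w = ext8 (X + Y) (v + w) := by
  simp [ext8]

lemma polar_ext8 {n : ℕ} (X Y : Fin 8 → ZMod 2) (v w : Fin n → ZMod 2) :
    polarForm (Qform (n + 8)) (ext8 X v) (ext8 Y w)
      = polarForm (Qform 8) X Y + polarForm (Qform n) v w := by
  unfold polarForm
  rw [ext8_add, Qform_ext8, Qform_ext8, Qform_ext8]
  ring

/-- Eight singular, pairwise non-orthogonal vectors of the eight-dimensional plus-type space. -/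
def eightVec : Fin 8 → Fin 8 → ZMod 2 :=
  ![![1, 0, 0, 0, 0, 0, 0, 0],
    ![0, 1, 0, 0, 0, 0, 0, 0],
    ![1, 1, 1, 1, 0, 0, 0, 0],
    ![1, 1, 1, 0, 1, 1, 0, 0],
    ![1, 1, 0, 1, 1, 1, 1, 0],
    ![1, 1, 0, 1, 1, 1, 0, 1],
    ![1, 1, 0, 1, 0, 0, 1, 1],
    ![1, 1, 1, 0, 1, 0, 1, 1]]

/-- The sum of the vectors of `eightVec`: a ninth singular vector, orthogonal to none of them. -/
def ninthVec : Fin 8 → ZMod 2 := ![1, 1, 1, 0, 0, 1, 1, 1]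

lemma eightVec_equiangular : Equiangular 8 0 eightVec :=
  ⟨by decide +kernel, by decide +kernel⟩

lemma ninthVec_singular : Qform 8 ninthVec = 0 := by decide +kernel

lemma polar_eightVec_ninthVec : ∀ j, polarForm (Qform 8) (eightVec j) ninthVec = 1 := by
  decide +kernel

lemma exists_family_add_eight {n : ℕ} (h : ∃ u : Fin n → Fin n → ZMod 2, Equiangular n 0 u) :
    ∃ u : Fin (n + 8) → Fin (n + 8) → ZMod 2, Equiangular (n + 8) 0 u := by
  obtain ⟨u, hu⟩ := h
  let w : Fin n ⊕ Fin 8 → Fin (n + 8) → ZMod 2 :=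
    Sum.elim (fun i => ext8 ninthVec (u i)) (fun j => ext8 (eightVec j) 0)
  have hw : Equiangular (n + 8) 0 w := by
    constructor
    · rintro (i | j)
      · simp [w, Qform_ext8, ninthVec_singular, hu.1]
      · simp [w, Qform_ext8, eightVec_equiangular.1, Qform_zero]
    · rintro (i | i) (j | j) hij
      · simp [w, polar_ext8, polar_self, hu.2 i j (by simpa using hij)]
      · simp only [w, Sum.elim_inl, Sum.elim_inr]
        rw [polar_comm, polar_ext8, polar_eightVec_ninthVec, polar_zero_left, add_zero]
      · simp [w, polar_ext8, polar_eightVec_ninthVec, polar_zero_left]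
      · simp [w, polar_ext8, polar_zero_left, eightVec_equiangular.2 i j (by simpa using hij)]
  exact ⟨fun i => w (finSumFinEquiv.symm i), fun i => hw.1 _,
    fun i j hij => hw.2 _ _ (by simpa using hij)⟩

lemma exists_family (k : ℕ) :
    ∃ u : Fin (8 * k + 2) → Fin (8 * k + 2) → ZMod 2, Equiangular (8 * k + 2) 0 u := by
  induction k with
  | zero =>
    refine ⟨(![![1, 0], ![0, 1]] : Fin 2 → Fin 2 → ZMod 2), ?_⟩
    change Equiangular 2 0 _
    exact ⟨by decide +kernel, by decide +kernel⟩
  | succ k ih => exact exists_family_add_eight ih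

/-- The coordinate permutation action of `S_n` carried to
`V` by the linear equivalence `L`. -/
def permRep {n : ℕ} (L : (Fin n → ZMod 2) ≃ₗ[ZMod 2] (Fin n → ZMod 2)) :
    Equiv.Perm (Fin n) →* ((Fin n → ZMod 2) ≃ₗ[ZMod 2] (Fin n → ZMod 2)) where
  toFun σ := L.symm ≪≫ₗ LinearEquiv.funCongrLeft (ZMod 2) (ZMod 2) σ.symm ≪≫ₗ L
  map_one' := by
    ext1 w
    exact L.apply_symm_apply w
  map_mul' σ τ := by
    ext1 w
    simp only [LinearEquiv.mul_apply, LinearEquiv.trans_apply, LinearEquiv.symm_apply_apply]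
    rfl

lemma permRep_apply {n : ℕ} (L : (Fin n → ZMod 2) ≃ₗ[ZMod 2] (Fin n → ZMod 2))
    (σ : Equiv.Perm (Fin n)) (x : Fin n → ZMod 2) :
    permRep L σ (L x) = L (fun i => x (σ.symm i)) := by
  change L (LinearEquiv.funCongrLeft (ZMod 2) (ZMod 2) σ.symm (L.symm (L x))) = _
  rw [L.symm_apply_apply]
  rfl

lemma permRep_injective {n : ℕ} (L : (Fin n → ZMod 2) ≃ₗ[ZMod 2] (Fin n → ZMod 2)) :
    Function.Injective (permRep L) := by
  intro σ τ h
  have h1 : σ.symm = τ.symm := by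
    ext1 i
    have h2 := congrArg (fun f => f (L (Pi.single (τ.symm i) 1))) h
    simp only [permRep_apply] at h2
    have h3 := congrFun (L.injective h2) i
    simp only [Pi.single_eq_same] at h3
    by_contra hne
    rw [Pi.single_eq_of_ne hne] at h3
    exact zero_ne_one h3
  simpa using congrArg Equiv.symm h1

theorem exists_embedding (k : ℕ) (n : ℕ) (hn : n = 8 * k + 2) :
    ∃ ψ : Equiv.Perm (Fin n) →* ((Fin n → ZMod 2) ≃ₗ[ZMod 2] (Fin n → ZMod 2)),
      Function.Injective ψ ∧
      ∀ τ : Equiv.Perm (Fin n), τ.IsSwap →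
        ∃ v : Fin n → ZMod 2, Qform n v = 1 ∧
          ∀ w, (ψ τ) w = w + polarForm (Qform n) w v • v := by
  obtain ⟨u, hu⟩ : ∃ u : Fin n → Fin n → ZMod 2, Equiangular n 0 u := by
    subst hn
    exact exists_family k
  have hinj := lin_injective (by subst hn; exact ⟨4 * k + 1, by ring⟩) u hu
  let L := LinearEquiv.ofInjectiveEndo (lin u) hinj
  have hL : ∀ x, L x = lin u x := fun x => rfl
  refine ⟨permRep L, permRep_injective L, ?_⟩
  rintro τ ⟨i, j, hij, rfl⟩
  refine ⟨u i + u j, by rw [Qform_add, hu.1, hu.1, hu.2 i j hij]; rfl, fun w => ?_⟩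
  obtain ⟨x, rfl⟩ := L.surjective w
  rw [permRep_apply, polar_add_right, hL, hL, polar_lin u hu, polar_lin u hu, ← lin_single u i,
    ← lin_single u j, ← map_add, ← map_smul, ← map_add]
  congr 1
  funext l
  have key : ∀ s a b : ZMod 2, s + a + (s + b) = a + b := by decide
  have key2 : ∀ a b : ZMod 2, a + (a + b) = b := by decide
  have key3 : ∀ a b : ZMod 2, b + (a + b) = a := by decide
  simp only [Equiv.symm_swap, key, Pi.add_apply, Pi.smul_apply, smul_eq_mul]
  by_cases hi : l = i
  · subst hi
    simp [hij, key2]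
  · by_cases hj : l = j
    · subst hj
      simp [hi, key3]
    · simp [hi, hj, Equiv.swap_apply_of_ne_of_ne hi hj]

/-! ### Gauss sums -/

/-- The sign character `t ↦ (-1)^t` of `ZMod 2`. -/
def chi (t : ZMod 2) : ℤ := if t = 0 then 1 else -1

lemma chi_add : ∀ a b : ZMod 2, chi (a + b) = chi a * chi b := by decide

lemma sum_add_two {n : ℕ} (f : (Fin (n + 2) → ZMod 2) → ℤ) :
    ∑ x, f x = ∑ x : Fin n → ZMod 2, ∑ a : ZMod 2, ∑ b : ZMod 2,
      f (Fin.cons a (Fin.cons b x : Fin (n + 1) → ZMod 2)) := by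
  have step : ∀ (m : ℕ) (g : (Fin (m + 1) → ZMod 2) → ℤ),
      ∑ x, g x = ∑ x : Fin m → ZMod 2, ∑ a : ZMod 2, g (Fin.cons a x) := by
    intro m g
    rw [← (Fin.consEquiv fun _ => ZMod 2).sum_comp, Fintype.sum_prod_type, Finset.sum_comm]
    rfl
  rw [step, step]
  refine Finset.sum_congr rfl fun x _ => ?_
  rw [Finset.sum_comm]

lemma gauss_Qform_add_two (n : ℕ) :
    ∑ x, chi (Qform (n + 2) x) = 2 * ∑ x, chi (Qform n x) := by
  rw [sum_add_two, Finset.mul_sum]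
  refine Finset.sum_congr rfl fun x _ => ?_
  have h : ∀ a b, Qform (n + 2) (Fin.cons a (Fin.cons b x : Fin (n + 1) → ZMod 2))
      = a * b + Qform n x := fun a b => Qform_vecCons a b x
  simp only [h]
  generalize Qform n x = q
  revert q
  decide

lemma gauss_Qform (m : ℕ) : ∑ x, chi (Qform (2 * m) x) = 2 ^ m := by
  induction m with
  | zero => simp [Qform, chi]
  | succ m ih => rw [show 2 * (m + 1) = 2 * m + 2 by ring, gauss_Qform_add_two, ih, pow_succ']

lemma gramForm_zero_add_sum {k : ℕ} (x : Fin k → ZMod 2) :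
    gramForm 0 k x + ∑ i, x i = gramForm 1 k x := by
  induction k with
  | zero => simp [gramForm]
  | succ k ih =>
    rw [gramForm, gramForm, Fin.sum_univ_succ, ← ih]
    ring

lemma gramForm_one_add_sum {k : ℕ} (x : Fin k → ZMod 2) :
    gramForm 1 k x + ∑ i, x i = gramForm 0 k x := by
  rw [← gramForm_zero_add_sum, add_assoc, CharTwo.add_self_eq_zero, add_zero]

lemma gramForm_cons_cons {k : ℕ} (c a b : ZMod 2) (x : Fin k → ZMod 2) :
    gramForm c (k + 2) (Fin.cons a (Fin.cons b x : Fin (k + 1) → ZMod 2))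
      = a * c + a * (b + ∑ i, x i) + (b * c + b * ∑ i, x i) + gramForm c k x := by
  simp only [gramForm, Fin.sum_univ_succ, Fin.cons_zero, Fin.cons_succ]
  ring

/-- For `s = ∑ xᵢ` the new terms are `(a + s)(b + s) + s`: a hyperbolic plane splits off. -/
lemma gauss_gramForm_zero (k : ℕ) :
    ∑ x, chi (gramForm 0 (k + 2) x) = 2 * ∑ x, chi (gramForm 1 k x) := by
  rw [sum_add_two, Finset.mul_sum]
  refine Finset.sum_congr rfl fun x _ => ?_
  simp only [gramForm_cons_cons, ← gramForm_zero_add_sum x]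
  generalize gramForm 0 k x = q
  generalize ∑ i, x i = s
  revert q s
  decide

/-- With `s = ∑ xᵢ`, `A = a + s` and `B = b + s` the new terms are `A² + A B + B² + s`: an
anisotropic plane splits off. -/
lemma gauss_gramForm_one (k : ℕ) :
    ∑ x, chi (gramForm 1 (k + 2) x) = -2 * ∑ x, chi (gramForm 0 k x) := by
  rw [sum_add_two, Finset.mul_sum]
  refine Finset.sum_congr rfl fun x _ => ?_
  simp only [gramForm_cons_cons, ← gramForm_one_add_sum x]
  generalize gramForm 1 k x = q
  generalize ∑ i, x i = s
  revert q s
  decide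

lemma gauss_gramForm_add_four (k : ℕ) :
    ∑ x, chi (gramForm 1 (k + 4) x) = -4 * ∑ x, chi (gramForm 1 k x) := by
  rw [gauss_gramForm_one (k + 2), gauss_gramForm_zero]
  ring

lemma gauss_gramForm_neg (k : ℕ) : ∑ x, chi (gramForm 1 (8 * k + 2) x) < 0 := by
  induction k with
  | zero =>
    rw [show 8 * 0 + 2 = 0 + 2 by rfl, gauss_gramForm_one]
    simp [gramForm, chi]
  | succ k ih =>
    rw [show 8 * (k + 1) + 2 = (8 * k + 2) + 4 + 4 by ring, gauss_gramForm_add_four,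
      gauss_gramForm_add_four]
    linarith

theorem no_one_equiangular (k : ℕ) (n : ℕ) (hn : n = 8 * k + 2)
    (u : Fin n → Fin n → ZMod 2) (hu : Equiangular n 1 u) : False := by
  subst hn
  have hinj := lin_injective ⟨4 * k + 1, by ring⟩ u hu
  have hbij : Function.Bijective (lin u) := Finite.injective_iff_bijective.1 hinj
  have h1 : ∑ x, chi (gramForm 1 (8 * k + 2) x) = ∑ v, chi (Qform (8 * k + 2) v) := by
    rw [← hbij.sum_comp (fun v => chi (Qform (8 * k + 2) v))]
    exact Finset.sum_congr rfl fun x _ => by rw [Qform_lin u hu]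
  have h2 := gauss_gramForm_neg k
  rw [h1, show 8 * k + 2 = 2 * (4 * k + 1) by ring, gauss_Qform] at h2
  exact absurd h2 (not_lt.2 (by positivity))

/-! ### Commuting transvections -/

lemma transvection_comm_of_polar_eq_zero {n : ℕ} (f g : (Fin n → ZMod 2) ≃ₗ[ZMod 2] (Fin n → ZMod 2))
    (a b : Fin n → ZMod 2) (hf : ∀ w, f w = w + polarForm (Qform n) w a • a)
    (hg : ∀ w, g w = w + polarForm (Qform n) w b • b) (hab : polarForm (Qform n) a b = 0) :
    f * g = g * f := by
  ext1 w
  have hba : polarForm (Qform n) b a = 0 := by rw [polar_comm, hab]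
  simp only [LinearEquiv.mul_apply, hf, hg, polar_add_left, polar_smul_left, hab, hba, mul_zero,
    add_zero]
  abel

theorem no_embedding (k : ℕ) (n : ℕ) (hn : n = 8 * k + 2) :
    ¬ (∃ ψ : Equiv.Perm (Fin (n + 1)) →* ((Fin n → ZMod 2) ≃ₗ[ZMod 2] (Fin n → ZMod 2)),
      Function.Injective ψ ∧
      ∀ τ : Equiv.Perm (Fin (n + 1)), τ.IsSwap →
        ∃ v : Fin n → ZMod 2, Qform n v = 1 ∧
          ∀ w, (ψ τ) w = w + polarForm (Qform n) w v • v) := by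
  rintro ⟨ψ, hψ, hτ⟩
  have hsw : ∀ i : Fin n, (Equiv.swap (0 : Fin (n + 1)) i.succ).IsSwap := fun i =>
    ⟨0, i.succ, (Fin.succ_ne_zero i).symm, rfl⟩
  choose u hu1 hu2 using fun i => hτ _ (hsw i)
  refine no_one_equiangular k n hn u ⟨hu1, fun i j hij => ?_⟩
  by_contra hne
  have h0 : polarForm (Qform n) (u i) (u j) = 0 := by
    generalize polarForm (Qform n) (u i) (u j) = t at hne
    revert t
    decide
  have hc := transvection_comm_of_polar_eq_zero _ _ _ _ (hu2 i) (hu2 j) h0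
  rw [← map_mul, ← map_mul] at hc
  -- The two products of `(0 i)` and `(0 j)` differ at `0`: they send it to `j` and to `i`.
  have h3 := congrArg (fun σ : Equiv.Perm (Fin (n + 1)) => σ 0) (hψ hc)
  have hij' : i.succ ≠ j.succ := by simpa using hij
  simp only [Equiv.Perm.mul_apply, Equiv.swap_apply_left] at h3
  rw [Equiv.swap_apply_of_ne_of_ne (Fin.succ_ne_zero _) hij'.symm,
    Equiv.swap_apply_of_ne_of_ne (Fin.succ_ne_zero _) hij'] at h3
  exact hij' h3.symm

end OPlus

/-- φ(O_n^{+}(2)) = n when n ≡ 2 (mod 8): S_n embeds with transpositions going to orthogonal transvections t_v with Q(v) = 1, while S_{n+1} does not. -/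
theorem phi_O_plus_2_mod8_two (n : ℕ) (hn : 10 ≤ n) (hmod : n % 8 = 2) :
    (∃ ψ : Equiv.Perm (Fin (n)) →* ((Fin n → ZMod 2) ≃ₗ[ZMod 2] (Fin n → ZMod 2)),
      Function.Injective ψ ∧
      ∀ τ : Equiv.Perm (Fin (n)), τ.IsSwap →
        ∃ v : Fin n → ZMod 2, Qform n v = 1 ∧
          ∀ w, (ψ τ) w = w + polarForm (Qform n) w v • v) ∧
    ¬ (∃ ψ : Equiv.Perm (Fin (n + 1)) →* ((Fin n → ZMod 2) ≃ₗ[ZMod 2] (Fin n → ZMod 2)),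
      Function.Injective ψ ∧
      ∀ τ : Equiv.Perm (Fin (n + 1)), τ.IsSwap →
        ∃ v : Fin n → ZMod 2, Qform n v = 1 ∧
          ∀ w, (ψ τ) w = w + polarForm (Qform n) w v • v) := by
  exact ⟨OPlus.exists_embedding (n / 8) n (by omega), OPlus.no_embedding (n / 8) n (by omega)⟩
end

section
/- Let n ≥ 6 be even. Let W = (Fin n → ZMod 2) with the alternating bilinear form B(x,y) = Σ_{i≠j} x_i y_j, let u = (1,…,1) ∈ W, let W' = {x ∈ W : B(x,u) = 0} (a subspace of W which contains u, and equals {x : Σ_i x_i = 0}), and let V = W' / span{u}, a vector space of dimension n − 2 over ZMod 2. Then: (a) B induces a well-defined nondegenerate alternating bilinear form β on V satisfying β([x],[y]) = B(x,y) for all x, y ∈ W'; (b) the coordinate-permutation action of the symmetric group S_n on W preserves W' and span{u} and hence induces a group homomorphism ψ : S_n → GL(V); (c) ψ is injective, every ψ(σ) preserves β, and for each transposition (i j) ∈ S_n the automorphism ψ((i j)) equals the symplectic transvection of V in the class of e_i + e_j, i.e., ψ((i j))([w]) = [w + B(w, e_i + e_j) • (e_i + e_j)] for all w ∈ W'. (Hence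 S_n embeds into Sp_{n−2}(2) with all transpositions mapping to symplectic transvections.) -/
/-!
Over `ZMod 2` one has `B x y = (∑ x) (∑ y) + ∑ i, x i * y i`, so on the hyperplane `W'` the form `B`
is the standard dot product. Everything follows from this. The dot product is permutation-invariant,
alternating on `W'` (as `x i * x i = x i`), and annihilates `u` on `W'`, so it descends to `V`.
A vector of `W'` orthogonal to all `e i + e j` has all its coordinates equal, that is, it lies in
`span {u}`; this is nondegeneracy. The swap of coordinates `i` and `j` adds
`(x i + x j) • (e i + e j)` to `x`, and `x i + x j = B x (e i + e j)`.

For injectivity, suppose that `τ = σ⁻¹` satisfies `τ a = b ≠ a`, pick `c ∉ {a, b}` and let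
`x = e b + e c`. If `σ` acts trivially on `V` then `x ∘ τ - x` is a constant vector. It is nonzero
at `a`, but it vanishes outside a set of at most four indices, which is impossible for `n ≥ 5`.
-/


/-- The alternating bilinear form `B x y = ∑_{i ≠ j} x i * y j` on `W = (ZMod 2)^n`. -/
def B18 (n : ℕ) (x y : Fin n → ZMod 2) : ZMod 2 :=
  ∑ i : Fin n, ∑ j : Fin n, if i ≠ j then x i * y j else 0

/-- The coordinate-sum linear functional on `(ZMod 2)^n`. -/
def coordSum (n : ℕ) : (Fin n → ZMod 2) →ₗ[ZMod 2] ZMod 2 :=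
  ∑ i : Fin n, LinearMap.proj i

/-- The hyperplane `W' = {x : ∑ i, x i = 0}` of `(ZMod 2)^n`. -/
def Wprime (n : ℕ) : Submodule (ZMod 2) (Fin n → ZMod 2) :=
  LinearMap.ker (coordSum n)

/-- For even `n`, the all-ones vector `u = (1, …, 1)` lies in `W'`. -/
lemma uMem (n : ℕ) (hn : Even n) : (fun _ => 1 : Fin n → ZMod 2) ∈ Wprime n := by
  obtain ⟨k, hk⟩ := hn
  simp only [Wprime, coordSum, LinearMap.mem_ker, LinearMap.sum_apply, LinearMap.proj_apply,
    hk, Finset.sum_const, Finset.card_univ, Fintype.card_fin, smul_eq_mul, mul_one]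
  rw [nsmul_eq_mul, mul_one, Nat.cast_add, ← two_mul]
  exact mul_eq_zero_of_left (by decide) _

/-- The all-ones vector as an element of `W'` (for even `n`). -/
def uElt (n : ℕ) (hn : Even n) : Wprime n := ⟨fun _ => 1, uMem n hn⟩

/-- The quotient space `V = W' / span{u}` (for even `n`). -/
abbrev V18 (n : ℕ) (hn : Even n) :=
  Wprime n ⧸ Submodule.span (ZMod 2) {uElt n hn}

lemma mem_Wprime_iff (n : ℕ) (x : Fin n → ZMod 2) : x ∈ Wprime n ↔ ∑ i, x i = 0 := by
  simp [Wprime, coordSum]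

lemma B18_eq (n : ℕ) (x y : Fin n → ZMod 2) :
    B18 n x y = (∑ i, x i) * (∑ i, y i) + x ⬝ᵥ y := by
  have h : ∀ i : Fin n, (∑ j : Fin n, if i ≠ j then x i * y j else 0)
      = x i * (∑ j, y j) + x i * y i := by
    intro i
    have h1 : ∀ j : Fin n, (if i ≠ j then x i * y j else 0)
        = x i * y j + if i = j then x i * y j else 0 := by
      intro j
      by_cases hij : i = j
      · simp [hij, CharTwo.add_self_eq_zero]
      · simp [hij]
    simp only [h1, Finset.sum_add_distrib, Finset.sum_ite_eq, Finset.mem_univ, if_true,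
      Finset.mul_sum]
  simp only [B18, h, Finset.sum_add_distrib, Finset.sum_mul, dotProduct]

lemma B18_eq_dotProduct (n : ℕ) (x : Wprime n) (y : Fin n → ZMod 2) :
    B18 n x.1 y = x.1 ⬝ᵥ y := by
  rw [B18_eq, (mem_Wprime_iff n _).1 x.2, zero_mul, zero_add]

lemma sum_one_eq_zero {n : ℕ} (hn : Even n) : ∑ _i : Fin n, (1 : ZMod 2) = 0 :=
  (mem_Wprime_iff n _).1 (uMem n hn)

lemma dotProduct_uElt {n : ℕ} (hn : Even n) (x : Wprime n) : x.1 ⬝ᵥ (uElt n hn).1 = 0 := by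
  simpa [dotProduct, uElt] using (mem_Wprime_iff n _).1 x.2

lemma mem_span_uElt_iff {n : ℕ} (hn : Even n) (x : Wprime n) :
    x ∈ Submodule.span (ZMod 2) {uElt n hn} ↔ ∃ c : ZMod 2, ∀ i, x.1 i = c := by
  rw [Submodule.mem_span_singleton]
  constructor
  · rintro ⟨c, rfl⟩
    exact ⟨c, fun i => by simp [uElt]⟩
  · rintro ⟨c, hc⟩
    exact ⟨c, Subtype.ext (funext fun i => by simp [uElt, hc])⟩

/-- The vector `e i + e j` as an element of `W'`. It is zero when `i = j`. -/
def pairElt (n : ℕ) (i j : Fin n) : Wprime n :=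
  ⟨Pi.single i 1 + Pi.single j 1, by
    rw [mem_Wprime_iff]
    simp [Finset.sum_add_distrib, CharTwo.add_self_eq_zero]⟩

/-- The dot product on `W'`, as a bilinear map. -/
def dotW (n : ℕ) : Wprime n →ₗ[ZMod 2] Wprime n →ₗ[ZMod 2] ZMod 2 :=
  LinearMap.mk₂ (ZMod 2) (fun x y => x.1 ⬝ᵥ y.1)
    (fun x y z => by simp [add_dotProduct]) (fun c x y => by simp [smul_dotProduct])
    (fun x y z => by simp [dotProduct_add]) (fun c x y => by simp [dotProduct_smul])

/-- The form `β` on `V` induced by the dot product on `W'`. -/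
def betaV (n : ℕ) (hn : Even n) : V18 n hn →ₗ[ZMod 2] V18 n hn →ₗ[ZMod 2] ZMod 2 :=
  Submodule.liftQ _
    (LinearMap.flip (Submodule.liftQ _ (dotW n).flip (by
      rw [Submodule.span_singleton_le_iff_mem, LinearMap.mem_ker]
      ext x
      exact dotProduct_uElt hn x))) (by
    rw [Submodule.span_singleton_le_iff_mem, LinearMap.mem_ker]
    refine LinearMap.ext fun v => ?_
    obtain ⟨x, rfl⟩ := Submodule.Quotient.mk_surjective _ v
    exact (dotProduct_comm _ _).trans (dotProduct_uElt hn x))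

lemma betaV_mk (n : ℕ) (hn : Even n) (x y : Wprime n) :
    betaV n hn (Submodule.Quotient.mk x) (Submodule.Quotient.mk y) = x.1 ⬝ᵥ y.1 := rfl

/-- The permutation action on `W'`: `(σ x) i = x (σ⁻¹ i)`. -/
def permW (n : ℕ) (σ : Equiv.Perm (Fin n)) : Wprime n →ₗ[ZMod 2] Wprime n where
  toFun x := ⟨fun i => x.1 (σ⁻¹ i), by
    rw [mem_Wprime_iff, Equiv.sum_comp σ⁻¹ x.1]
    exact (mem_Wprime_iff n _).1 x.2⟩
  map_add' _ _ := rfl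
  map_smul' _ _ := rfl

/-- The endomorphisms of `V` induced by the permutation action. -/
def permEnd (n : ℕ) (hn : Even n) : Equiv.Perm (Fin n) →* Module.End (ZMod 2) (V18 n hn) where
  toFun σ := Submodule.mapQ _ _ (permW n σ) (by
    rw [Submodule.span_singleton_le_iff_mem]
    exact Submodule.subset_span rfl)
  map_one' := by
    refine LinearMap.ext fun v => ?_
    obtain ⟨x, rfl⟩ := Submodule.Quotient.mk_surjective _ v
    rfl
  map_mul' σ τ := by
    refine LinearMap.ext fun v => ?_
    obtain ⟨x, rfl⟩ := Submodule.Quotient.mk_surjective _ v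
    simp only [Module.End.mul_apply, Submodule.mapQ_apply]
    congr 1

/-- The homomorphism `ψ : S_n → GL(V)`. -/
def psiV (n : ℕ) (hn : Even n) : Equiv.Perm (Fin n) →* (V18 n hn ≃ₗ[ZMod 2] V18 n hn) :=
  (LinearMap.GeneralLinearGroup.generalLinearEquiv (ZMod 2) (V18 n hn)).toMonoidHom.comp
    (permEnd n hn).toHomUnits

lemma psiV_mk (n : ℕ) (hn : Even n) (σ : Equiv.Perm (Fin n)) (x : Wprime n) :
    psiV n hn σ (Submodule.Quotient.mk x) = Submodule.Quotient.mk (permW n σ x) := rfl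

lemma finrank_V18 (n : ℕ) (hn : 6 ≤ n) (hev : Even n) :
    Module.finrank (ZMod 2) (V18 n hev) = n - 2 := by
  have hu : uElt n hev ≠ 0 := fun h => by
    have := congrFun (congrArg Subtype.val h) (⟨0, by omega⟩ : Fin n)
    simp [uElt] at this
  have h1 := Submodule.finrank_quotient_add_finrank (Submodule.span (ZMod 2) {uElt n hev})
  rw [finrank_span_singleton hu] at h1
  have h2 := LinearMap.finrank_range_add_finrank_ker (coordSum n)
  have h3 : LinearMap.range (coordSum n) = ⊤ := by
    rw [LinearMap.range_eq_top]
    intro c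
    exact ⟨Pi.single ⟨0, by omega⟩ c, by simp [coordSum]⟩
  rw [h3, finrank_top, Module.finrank_self, Module.finrank_fin_fun] at h2
  change 1 + Module.finrank (ZMod 2) (Wprime n) = n at h2
  change Module.finrank (ZMod 2) (V18 n hev) + 1 = _ at h1
  omega

lemma betaV_nondegenerate (n : ℕ) (hn : 6 ≤ n) (hev : Even n) (v : V18 n hev)
    (hv : ∀ w, betaV n hev v w = 0) : v = 0 := by
  obtain ⟨x, rfl⟩ := Submodule.Quotient.mk_surjective _ v
  rw [Submodule.Quotient.mk_eq_zero, mem_span_uElt_iff]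
  refine ⟨x.1 ⟨0, by omega⟩, fun i => ?_⟩
  have h := hv (Submodule.Quotient.mk (pairElt n i ⟨0, by omega⟩))
  rw [betaV_mk] at h
  simpa [pairElt, dotProduct_add, CharTwo.add_eq_zero] using h

lemma psiV_injective (n : ℕ) (hn : 6 ≤ n) (hev : Even n) :
    Function.Injective (psiV n hev) := by
  rw [injective_iff_map_eq_one]
  intro σ hσ
  by_contra hne
  obtain ⟨a, ha⟩ : ∃ a, σ⁻¹ a ≠ a := by
    by_contra! h
    exact hne (inv_eq_one.1 (Equiv.ext h))
  obtain ⟨c, hc⟩ : ∃ c, c ∉ ({a, σ⁻¹ a} : Finset (Fin n)) := by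
    by_contra! h
    have := Finset.card_le_card (Finset.eq_univ_iff_forall.2 h).ge
    have := Finset.card_le_two (a := a) (b := σ⁻¹ a)
    simp at *
    omega
  -- `k` is an index at which both `e b + e c` and its permuted version vanish
  obtain ⟨k, hk⟩ : ∃ k, k ∉ ({σ⁻¹ a, c, a, σ c} : Finset (Fin n)) := by
    by_contra! h
    have := Finset.card_le_card (Finset.eq_univ_iff_forall.2 h).ge
    have := Finset.card_le_four (a := σ⁻¹ a) (b := c) (c := a) (d := σ c)
    simp only [Finset.card_univ, Fintype.card_fin] at *
    omega
  simp only [Finset.mem_insert, Finset.mem_singleton, not_or] at hc hk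
  have h := psiV_mk n hev σ (pairElt n (σ⁻¹ a) c)
  rw [hσ] at h
  obtain ⟨d, hd⟩ := (mem_span_uElt_iff hev _).1
    ((Submodule.Quotient.eq _).1 (h.symm : Submodule.Quotient.mk _ = Submodule.Quotient.mk _))
  have hda := hd a
  have hdk := hd k
  have hk2 : σ⁻¹ k ≠ c := fun e => hk.2.2.2 (by rw [← e]; simp)
  have hk3 : σ⁻¹ k ≠ σ⁻¹ a := fun e => hk.2.2.1 (σ⁻¹.injective e)
  have e1 : (pairElt n (σ⁻¹ a) c).1 (σ⁻¹ a) = 1 := by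
    simp only [pairElt, Pi.add_apply, Pi.single_eq_same, Pi.single_eq_of_ne (Ne.symm hc.2), add_zero]
  have e2 : (pairElt n (σ⁻¹ a) c).1 a = 0 := by
    simp only [pairElt, Pi.add_apply, Pi.single_eq_of_ne (Ne.symm ha),
      Pi.single_eq_of_ne (Ne.symm hc.1), add_zero]
  have e3 : (pairElt n (σ⁻¹ a) c).1 (σ⁻¹ k) = 0 := by
    simp only [pairElt, Pi.add_apply, Pi.single_eq_of_ne hk3, Pi.single_eq_of_ne hk2, add_zero]
  have e4 : (pairElt n (σ⁻¹ a) c).1 k = 0 := by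
    simp only [pairElt, Pi.add_apply, Pi.single_eq_of_ne hk.1, Pi.single_eq_of_ne hk.2.1, add_zero]
  change (pairElt n (σ⁻¹ a) c).1 (σ⁻¹ a) - (pairElt n (σ⁻¹ a) c).1 a = d at hda
  change (pairElt n (σ⁻¹ a) c).1 (σ⁻¹ k) - (pairElt n (σ⁻¹ a) c).1 k = d at hdk
  rw [e1, e2] at hda
  rw [e3, e4, ← hda] at hdk
  simp at hdk

/-- For even `n ≥ 6`, with `W = (ZMod 2)^n`, `B x y = ∑_{i≠j} x i * y j`,
`u = (1,…,1)`, `W' = {x : ∑ i, x i = 0} = {x : B x u = 0}` and `V = W' / span{u}` of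
dimension `n - 2`: the form `B` induces a well-defined nondegenerate alternating bilinear
form `β` on `V`; the coordinate-permutation action of `S_n` induces an injective
homomorphism `ψ : S_n → GL(V)` preserving `β`; and each transposition `(i j)` maps to the
symplectic transvection of `V` in the class of `e i + e j`. Hence `S_n` embeds into
`Sp_{n-2}(2)` with all transpositions going to symplectic transvections. -/
theorem symmetric_group_into_symplectic_quotient (n : ℕ) (hn : 6 ≤ n) (hev : Even n) :
    -- `W'` is exactly `{x : B x u = 0}` (and it contains `u`)
    (∀ x : Fin n → ZMod 2, x ∈ Wprime n ↔ B18 n x (fun _ => 1) = 0) ∧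
    -- `V` has dimension `n - 2` over `ZMod 2`
    Module.finrank (ZMod 2) (V18 n hev) = n - 2 ∧
    -- (a) `B` induces a well-defined nondegenerate alternating bilinear form `β` on `V`
    (∃ β : V18 n hev →ₗ[ZMod 2] V18 n hev →ₗ[ZMod 2] ZMod 2,
      (∀ x y : Wprime n,
        β (Submodule.Quotient.mk x) (Submodule.Quotient.mk y) = B18 n x.1 y.1) ∧
      (∀ v : V18 n hev, β v v = 0) ∧
      (∀ v : V18 n hev, (∀ w : V18 n hev, β v w = 0) → v = 0) ∧
      -- (b) the coordinate-permutation action of `S_n` on `W` induces `ψ : S_n → GL(V)`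
      (∃ ψ : Equiv.Perm (Fin n) →* (V18 n hev ≃ₗ[ZMod 2] V18 n hev),
        (∀ (σ : Equiv.Perm (Fin n)) (x x' : Wprime n),
          (∀ i, x'.1 i = x.1 (σ⁻¹ i)) →
            (ψ σ) (Submodule.Quotient.mk x) = Submodule.Quotient.mk x') ∧
        -- (c) `ψ` is injective and preserves `β`
        Function.Injective ψ ∧
        (∀ (σ : Equiv.Perm (Fin n)) (v w : V18 n hev), β ((ψ σ) v) ((ψ σ) w) = β v w) ∧
        -- transpositions act as the symplectic transvections in the classes `[e i + e j]`
        (∀ i j : Fin n, i ≠ j → ∀ x x' : Wprime n,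
          x'.1 = x.1 + B18 n x.1 (Pi.single i 1 + Pi.single j 1) •
              (Pi.single i 1 + Pi.single j 1) →
            (ψ (Equiv.swap i j)) (Submodule.Quotient.mk x) = Submodule.Quotient.mk x'))) := by
  refine ⟨fun x => ?_, finrank_V18 n hn hev, betaV n hev, fun x y => ?_, fun v => ?_,
    betaV_nondegenerate n hn hev, psiV n hev, fun σ x x' h => ?_, psiV_injective n hn hev,
    fun σ v w => ?_, fun i j hij x x' h => ?_⟩
  · rw [B18_eq, sum_one_eq_zero hev, mul_zero, zero_add, mem_Wprime_iff]
    simp [dotProduct]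
  · rw [betaV_mk, B18_eq_dotProduct]
  · obtain ⟨x, rfl⟩ := Submodule.Quotient.mk_surjective _ v
    rw [betaV_mk, ← (mem_Wprime_iff n _).1 x.2]
    have hsq : ∀ c : ZMod 2, c * c = c := by decide
    exact Finset.sum_congr rfl fun i _ => hsq _
  · rw [psiV_mk]
    congr 1
    exact Subtype.ext (funext fun i => (h i).symm)
  · obtain ⟨x, rfl⟩ := Submodule.Quotient.mk_surjective _ v
    obtain ⟨y, rfl⟩ := Submodule.Quotient.mk_surjective _ w
    rw [psiV_mk, psiV_mk, betaV_mk, betaV_mk]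
    exact Equiv.sum_comp σ⁻¹ fun i => x.1 i * y.1 i
  · rw [psiV_mk]
    congr 1
    refine Subtype.ext (funext fun k => ?_)
    rw [h, B18_eq_dotProduct]
    have h2 : ∀ p q : ZMod 2, q = p + (p + q) ∧ p = q + (p + q) := by decide
    change x.1 ((Equiv.swap i j)⁻¹ k) = _
    rw [Equiv.swap_inv]
    by_cases hi : k = i
    · subst hi
      simpa [hij, dotProduct_add] using (h2 _ _).1
    · by_cases hj : k = j
      · subst hj
        simpa [hi, dotProduct_add] using (h2 _ _).2
      · simp [Equiv.swap_apply_of_ne_of_ne hi hj, hi, hj]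
end
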